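/- Let (ℋ, 𝒜, ⟨·,·⟩_𝒜) and (ℋ, ℬ, ⟨·,·⟩_ℬ) be two Hilbert C*-modules over unital C*-algebras 𝒜 and ℬ (on the same underlying space ℋ), let φ : 𝒜 → ℬ be a ∗-homomorphism, and let θ : ℋ → ℋ be a map such that ⟨θx, θy⟩_ℬ = φ(⟨x, y⟩_𝒜) for all x, y ∈ ℋ. Let C, C' ∈ GL⁺(ℋ) and suppose {T_i}_{i∈I} ⊆ End*_𝒜(ℋ) is a (C,C')-controlled ∗-operator frame for (ℋ, 𝒜, ⟨·,·⟩_𝒜) with bounds A and B. If θ is surjective, θT_i = T_iθ for every i ∈ I, θC = Cθ and θC' = C'θ, then {T_i}_{i∈I} is a (C,C')-controlled ∗-operator frame for (ℋ, ℬ, ⟨·,·⟩_ℬ) with bounds φ(A) and φ(B), i.e. φ(A) ⟨y,y⟩_ℬ (φ(A))* ≤ Σ_{i∈I} ⟨T_i C y, T_i C' y⟩_ℬ ≤ φ(B) ⟨y,y⟩_ℬ (φ(B))* for all y ∈ ℋ. -/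

import Mathlib

open scoped ComplexOrder

/-- Let `(H, 𝒜, innA)` and `(H, ℬ, innB)` be Hilbert C*-modules on the same
space `H`, `φ : 𝒜 → ℬ` a ∗-homomorphism and `θ : H → H` a map with `innB (θx) (θy) = φ (innA x y)`.
If `{Tᵢ}` is a (C,C')-controlled ∗-operator frame over `𝒜` with bounds `a`, `b`, and `θ` is
surjective and commutes with every `Tᵢ`, with `C` and with `C'`, then `{Tᵢ}` is a
(C,C')-controlled ∗-operator frame over `ℬ` with bounds `φ a` and `φ b`. -/
theorem controlled_star_operator_frame_transfer
    {𝒜 : Type*} [CStarAlgebra 𝒜] [PartialOrder 𝒜] [StarOrderedRing 𝒜]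
    {ℬ : Type*} [CStarAlgebra ℬ] [PartialOrder ℬ] [StarOrderedRing ℬ]
    {H : Type*} [AddCommGroup H] [Module ℂ H]
    -- the 𝒜-valued and ℬ-valued inner products (pre-Hilbert module structures)
    (innA : H → H → 𝒜) (innB : H → H → ℬ)
    (hA_add : ∀ x y z : H, innA (x + y) z = innA x z + innA y z)
    (hA_star : ∀ x y : H, star (innA x y) = innA y x)
    (hA_pos : ∀ x : H, 0 ≤ innA x x)
    (hA_def : ∀ x : H, innA x x = 0 ↔ x = 0)
    (hB_add : ∀ x y z : H, innB (x + y) z = innB x z + innB y z)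
    (hB_star : ∀ x y : H, star (innB x y) = innB y x)
    (hB_pos : ∀ x : H, 0 ≤ innB x x)
    (hB_def : ∀ x : H, innB x x = 0 ↔ x = 0)
    -- φ is a ∗-homomorphism, θ intertwines the two inner products
    (φ : 𝒜 →⋆ₐ[ℂ] ℬ) (θ : H → H)
    (hθinn : ∀ x y : H, innB (θ x) (θ y) = φ (innA x y))
    -- the family of adjointable operators
    {I : Type*} (T Tadj : I → H → H)
    (hadj : ∀ i (x y : H), innA (T i x) y = innA x (Tadj i y))
    -- C, C' ∈ GL⁺(H): positive, selfadjoint and invertible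
    (C C' : H → H)
    (hCpos : ∀ x : H, 0 ≤ innA (C x) x)
    (hCsa : ∀ x y : H, innA (C x) y = innA x (C y))
    (hCinv : Function.Bijective C)
    (hC'pos : ∀ x : H, 0 ≤ innA (C' x) x)
    (hC'sa : ∀ x y : H, innA (C' x) y = innA x (C' y))
    (hC'inv : Function.Bijective C')
    -- (C,C')-controlled ∗-operator frame over 𝒜 with strictly nonzero bounds a, b
    (a b : 𝒜) (ha : a ≠ 0) (hb : b ≠ 0)
    (hsumA : ∀ x : H, Summable fun i => innA (T i (C x)) (T i (C' x)))
    (hlow : ∀ x : H, a * innA x x * star a ≤ ∑' i, innA (T i (C x)) (T i (C' x)))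
    (hupp : ∀ x : H, ∑' i, innA (T i (C x)) (T i (C' x)) ≤ b * innA x x * star b)
    -- θ is surjective and commutes with the Tᵢ, with C and with C'
    (hθsurj : Function.Surjective θ)
    (hθT : ∀ i (x : H), θ (T i x) = T i (θ x))
    (hθC : ∀ x : H, θ (C x) = C (θ x))
    (hθC' : ∀ x : H, θ (C' x) = C' (θ x)) :
    (∀ y : H, Summable fun i => innB (T i (C y)) (T i (C' y))) ∧
      ∀ y : H,
        φ a * innB y y * star (φ a) ≤ ∑' i, innB (T i (C y)) (T i (C' y)) ∧
          ∑' i, innB (T i (C y)) (T i (C' y)) ≤ φ b * innB y y * star (φ b) := by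
  have hcont : Continuous φ := map_continuous φ
  have hmono : Monotone φ := OrderHomClass.mono φ
  have key : ∀ x : H, (fun i => innB (T i (C (θ x))) (T i (C' (θ x)))) =
      fun i => φ (innA (T i (C x)) (T i (C' x))) := by
    intro x
    funext i
    rw [← hθC, ← hθC', ← hθT, ← hθT, hθinn]
  have hs : ∀ x : H, HasSum (fun i => innB (T i (C (θ x))) (T i (C' (θ x))))
      (φ (∑' i, innA (T i (C x)) (T i (C' x)))) := by
    intro x
    rw [key]
    exact (hsumA x).hasSum.map φ hcont
  refine ⟨fun y => ?_, fun y => ?_⟩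
  · obtain ⟨x, rfl⟩ := hθsurj y
    exact (hs x).summable
  · obtain ⟨x, rfl⟩ := hθsurj y
    rw [(hs x).tsum_eq, hθinn, ← map_star, ← map_star, ← map_mul, ← map_mul, ← map_mul,
      ← map_mul]
    exact ⟨hmono (hlow x), hmono (hupp x)⟩
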